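/- arXiv:1504.03026 — 2 statements merged into one kernel-verified Lean document; each statement's English description precedes it below -/
import Mathlib

section
/- For any graph function α, ρ^R/2 ≤ h, where ρ^R = max_v ρ_v^R is the raising imbalance of α and h = y_max − y_min is the difference between the maximum and minimum heights. -/
/-!
The limit `r*` of the raising vectors turns `α` into a raising-balanced graph function
`α^R u v = α u v + r*_v - r*_u`: a vertex `v` is operated on infinitely often, its imbalance at
those times is twice the increment of a convergent sequence, and the imbalance is continuous in the
graph function. Passing from `α` to `α^R` changes the weight of an edge at `v` by the difference of
the heights of its ends. Hence `α_v^out` drops by at most `y_max - y_v` and `α_v^in` grows by at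
most `y_max - y_v`, and since `α^R` has no positive imbalance left, `ρ_v^R ≤ 2 (y_max - y_v)`.
-/

open Filter Topology

variable {V : Type*}

/-- Maximum weight of an edge leaving `v` (as a supremum over the finite edge set). -/
noncomputable def outMax (E : V → V → Prop) (α : V → V → ℝ) (v : V) : ℝ :=
  sSup {x : ℝ | ∃ w, E v w ∧ x = α v w}

/-- Maximum weight of an edge entering `v`. -/
noncomputable def inMax (E : V → V → Prop) (α : V → V → ℝ) (v : V) : ℝ :=
  sSup {x : ℝ | ∃ u, E u v ∧ x = α u v}

/-- A graph function is balanced if the max outgoing weight equals the max incoming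
weight at every vertex. -/
def IsBalancedGF (E : V → V → Prop) (α : V → V → ℝ) : Prop :=
  ∀ v, outMax E α v = inMax E α v

/-- Raising imbalance at `v`. -/
noncomputable def rhoR (E : V → V → Prop) (α : V → V → ℝ) (v : V) : ℝ :=
  max 0 (outMax E α v - inMax E α v)

/-- Lowering imbalance at `v`. -/
noncomputable def rhoL (E : V → V → Prop) (α : V → V → ℝ) (v : V) : ℝ :=
  max 0 (inMax E α v - outMax E α v)

/-- A balancing operation at `v`: add `(α_v^out − α_v^in)/2` to every edge entering `v`
and subtract the same quantity from every edge leaving `v` (a self-loop is unchanged). -/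
noncomputable def balanceAt [DecidableEq V] (E : V → V → Prop) (α : V → V → ℝ) (v : V) :
    V → V → ℝ :=
  fun a b =>
    α a b + (if b = v then (outMax E α v - inMax E α v) / 2 else 0)
          - (if a = v then (outMax E α v - inMax E α v) / 2 else 0)

/-- A raising operation at `v`: balance at `v` if the raising imbalance is positive,
otherwise do nothing. -/
noncomputable def raiseOp [DecidableEq V] (E : V → V → Prop) (α : V → V → ℝ) (v : V) :
    V → V → ℝ :=
  if 0 < rhoR E α v then balanceAt E α v else α

/-- A lowering operation at `v`: balance at `v` if the lowering imbalance is positive,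
otherwise do nothing. -/
noncomputable def lowerOp [DecidableEq V] (E : V → V → Prop) (α : V → V → ℝ) (v : V) :
    V → V → ℝ :=
  if 0 < rhoL E α v then balanceAt E α v else α

/-- A sequence of vertices is fair if every vertex appears infinitely often. -/
def Fair (σ : ℕ → V) : Prop := ∀ (v : V) (N : ℕ), ∃ t, N ≤ t ∧ σ t = v

/-- State after `t` raising operations along the sequence `σ`. -/
noncomputable def raiseIter [DecidableEq V] (E : V → V → Prop) (α : V → V → ℝ)
    (σ : ℕ → V) : ℕ → V → V → ℝ
  | 0 => α
  | t + 1 => raiseOp E (raiseIter E α σ t) (σ t)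

/-- State after `t` lowering operations along the sequence `σ`. -/
noncomputable def lowerIter [DecidableEq V] (E : V → V → Prop) (α : V → V → ℝ)
    (σ : ℕ → V) : ℕ → V → V → ℝ
  | 0 => α
  | t + 1 => lowerOp E (lowerIter E α σ t) (σ t)

/-- The raising vector: cumulative amount by which each vertex has been raised after
`t` raising operations along `σ`. -/
noncomputable def rvec [DecidableEq V] (E : V → V → Prop) (α : V → V → ℝ)
    (σ : ℕ → V) : ℕ → V → ℝ
  | 0 => fun _ => 0
  | t + 1 => fun u =>
      rvec E α σ t u + (if u = σ t then rhoR E (raiseIter E α σ t) (σ t) / 2 else 0)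

/-- State after performing raising operations along a finite list of vertices. -/
noncomputable def raiseList [DecidableEq V] (E : V → V → Prop) :
    (V → V → ℝ) → List V → V → V → ℝ
  | α, [] => α
  | α, v :: l => raiseList E (raiseOp E α v) l

/-- Raising vector accumulated along a finite list of raising operations. -/
noncomputable def rvecList [DecidableEq V] (E : V → V → Prop) :
    (V → V → ℝ) → List V → V → ℝ
  | _, [] => fun _ => 0
  | α, v :: l => fun u =>
      (if u = v then rhoR E α v / 2 else 0) + rvecList E (raiseOp E α v) l u

/-- State after performing (unconditional) balancing operations along a list. -/
noncomputable def balList [DecidableEq V] (E : V → V → Prop) :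
    (V → V → ℝ) → List V → V → V → ℝ
  | α, [] => α
  | α, v :: l => balList E (balanceAt E α v) l

/-- State after `t` balancing operations along the sequence `σ`. -/
noncomputable def balIter [DecidableEq V] (E : V → V → Prop) (α : V → V → ℝ)
    (σ : ℕ → V) : ℕ → V → V → ℝ
  | 0 => α
  | t + 1 => balanceAt E (balIter E α σ t) (σ t)

/-- Two graph functions are equivalent if their sums around every directed cycle agree. -/
def Equivalent (E : V → V → Prop) (α γ : V → V → ℝ) : Prop :=
  ∀ (k : ℕ) (f : ZMod (k + 1) → V), (∀ i, E (f i) (f (i + 1))) →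
    (∑ i, α (f i) (f (i + 1))) = ∑ i, γ (f i) (f (i + 1))

/-- The raising-balanced graph function determined by the limiting raising vector. -/
noncomputable def alphaR (α : V → V → ℝ) (rstar : V → ℝ) : V → V → ℝ :=
  fun u v => α u v + rstar v - rstar u

/-- Height of a vertex: `y_v = -r*_v`. -/
noncomputable def height (rstar : V → ℝ) (v : V) : ℝ := -rstar v

/-- Level of a vertex: maximum over incoming edges of `α^R`. -/
noncomputable def level (E : V → V → Prop) (α : V → V → ℝ) (rstar : V → ℝ) (v : V) : ℝ :=
  inMax E (alphaR α rstar) v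

/-- Momentum of a vertex: `m_v = max over edges (u,v) entering v of (α_{uv} − x_v)`. -/
noncomputable def momentum (E : V → V → Prop) (α : V → V → ℝ) (rstar : V → ℝ) (v : V) : ℝ :=
  sSup {c : ℝ | ∃ u, E u v ∧ c = α u v - level E α rstar v}

/-- A graph function is raising-balanced if its raising imbalance vanishes at every vertex; this is
the property of the limit of a fair raising process. -/
def IsRaisingBalanced (E : V → V → Prop) (α : V → V → ℝ) : Prop :=
  ∀ v, rhoR E α v = 0

variable {E : V → V → Prop} {α β : V → V → ℝ} {v : V}

section ExtremalWeights

theorem inMax_eq_outMax_flip (E : V → V → Prop) (α : V → V → ℝ) (v : V) :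
    inMax E α v = outMax (flip E) (flip α) v :=
  rfl

theorem le_outMax [Finite V] {w : V} (h : E v w) : α v w ≤ outMax E α v := by
  refine le_csSup ((Set.finite_range (α v)).subset ?_).bddAbove ⟨w, h, rfl⟩
  rintro _ ⟨u, -, rfl⟩
  exact Set.mem_range_self u

theorem outMax_le_outMax_add [Finite V] {c : ℝ} (hv : ∃ w, E v w)
    (h : ∀ w, E v w → α v w ≤ β v w + c) : outMax E α v ≤ outMax E β v + c := by
  obtain ⟨w₀, hw₀⟩ := hv
  refine csSup_le ⟨_, w₀, hw₀, rfl⟩ ?_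
  rintro _ ⟨w, hw, rfl⟩
  exact (h w hw).trans (add_le_add_left (le_outMax hw) c)

theorem inMax_le_inMax_add [Finite V] {c : ℝ} (hv : ∃ u, E u v)
    (h : ∀ u, E u v → α u v ≤ β u v + c) : inMax E α v ≤ inMax E β v + c :=
  outMax_le_outMax_add (E := flip E) (α := flip α) (β := flip β) hv h

theorem continuous_outMax [Finite V] (E : V → V → Prop) (v : V) :
    Continuous fun α : V → V → ℝ => outMax E α v := by
  let : TopologicalSpace V := ⊥
  have : DiscreteTopology V := ⟨rfl⟩
  have heval : Continuous fun p : (V → V → ℝ) × V => p.1 v p.2 :=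
    continuous_prod_of_discrete_right.2 fun w => continuous_apply_apply v w
  have himage (α : V → V → ℝ) : {x | ∃ w, E v w ∧ x = α v w} = α v '' {w | E v w} := by
    ext x
    simp only [Set.mem_ofPred_eq, Set.mem_image, eq_comm]
  simp only [outMax, himage]
  exact (Set.toFinite {w | E v w}).isCompact.continuous_sSup
    (f := fun (α : V → V → ℝ) w => α v w) heval

theorem continuous_inMax [Finite V] (E : V → V → Prop) (v : V) :
    Continuous fun α : V → V → ℝ => inMax E α v := by
  have hflip : Continuous fun α : V → V → ℝ => flip α :=
    continuous_pi fun a => continuous_pi fun b => continuous_apply_apply b a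
  exact (continuous_outMax (flip E) v).comp hflip

theorem continuous_rhoR [Finite V] (E : V → V → Prop) (v : V) :
    Continuous fun α : V → V → ℝ => rhoR E α v :=
  continuous_const.max ((continuous_outMax E v).sub (continuous_inMax E v))

end ExtremalWeights

section Potentials

theorem alphaR_zero (α : V → V → ℝ) : alphaR α 0 = α := by
  ext a b
  simp [alphaR]

theorem alphaR_alphaR (α : V → V → ℝ) (r s : V → ℝ) :
    alphaR (alphaR α r) s = alphaR α (r + s) := by
  ext a b
  simp only [alphaR, Pi.add_apply]
  ring

theorem continuous_alphaR (α : V → V → ℝ) : Continuous (alphaR α) := by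
  unfold alphaR
  fun_prop

theorem rhoR_div_two_le_sub_height [Finite V] {r : V → ℝ} {M : ℝ} (hout : ∃ w, E v w)
    (hin : ∃ u, E u v) (hbal : rhoR E (alphaR α r) v = 0) (hM : ∀ u, height r u ≤ M) :
    rhoR E α v / 2 ≤ M - height r v := by
  have out_le : outMax E α v ≤ outMax E (alphaR α r) v + (M - height r v) := by
    refine outMax_le_outMax_add hout fun w _ => ?_
    have := hM w
    simp only [alphaR, height] at this ⊢
    linarith
  have le_in : inMax E (alphaR α r) v ≤ inMax E α v + (M - height r v) := by
    refine inMax_le_inMax_add hin fun u _ => ?_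
    have := hM u
    simp only [alphaR, height] at this ⊢
    linarith
  have out_le_in : outMax E (alphaR α r) v ≤ inMax E (alphaR α r) v :=
    sub_nonpos.1 ((le_max_right _ _).trans_eq hbal)
  have rhoR_le : rhoR E α v ≤ 2 * (M - height r v) :=
    max_le (by linarith [hM v]) (by linarith)
  linarith

end Potentials

section RaisingProcess

variable [DecidableEq V] {σ : ℕ → V} {r : V → ℝ}

theorem exists_fair (V : Type*) [Countable V] [Nonempty V] : ∃ σ : ℕ → V, Fair σ := by
  obtain ⟨f, hf⟩ := exists_surjective_nat V
  refine ⟨fun t => f t.unpair.1, fun v N => ?_⟩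
  obtain ⟨k, rfl⟩ := hf v
  exact ⟨Nat.pair k N, Nat.right_le_pair k N, by simp only [Nat.unpair_pair]⟩

theorem raiseOp_eq_alphaR (E : V → V → Prop) (α : V → V → ℝ) (v : V) :
    raiseOp E α v = alphaR α (Pi.single v (rhoR E α v / 2)) := by
  by_cases hpos : 0 < rhoR E α v
  · have hlt : 0 < outMax E α v - inMax E α v := by
      simpa only [rhoR, lt_max_iff, lt_irrefl, false_or] using hpos
    have hrho : rhoR E α v = outMax E α v - inMax E α v := max_eq_right hlt.le
    ext a b
    rw [raiseOp, if_pos hpos, hrho]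
    simp only [balanceAt, alphaR, Pi.single_apply]
  · have hrho : rhoR E α v = 0 := le_antisymm (not_lt.1 hpos) (le_max_left _ _)
    rw [raiseOp, if_neg hpos, hrho, zero_div, Pi.single_zero, alphaR_zero]

theorem rvec_succ (E : V → V → Prop) (α : V → V → ℝ) (σ : ℕ → V) (t : ℕ) :
    rvec E α σ (t + 1) =
      rvec E α σ t + Pi.single (σ t) (rhoR E (raiseIter E α σ t) (σ t) / 2) := by
  ext u
  simp only [rvec, Pi.add_apply, Pi.single_apply]

theorem raiseIter_eq_alphaR (E : V → V → Prop) (α : V → V → ℝ) (σ : ℕ → V) (t : ℕ) :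
    raiseIter E α σ t = alphaR α (rvec E α σ t) := by
  induction t with
  | zero => exact (alphaR_zero α).symm
  | succ t ih =>
    calc raiseOp E (raiseIter E α σ t) (σ t)
        = alphaR (alphaR α (rvec E α σ t))
            (Pi.single (σ t) (rhoR E (raiseIter E α σ t) (σ t) / 2)) := by
          rw [raiseOp_eq_alphaR, ← ih]
      _ = alphaR α (rvec E α σ (t + 1)) := by rw [alphaR_alphaR, rvec_succ]

theorem Fair.isRaisingBalanced_alphaR [Finite V] (hσ : Fair σ)
    (hr : Tendsto (rvec E α σ) atTop (𝓝 r)) : IsRaisingBalanced E (alphaR α r) := by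
  intro v
  have tendsto_rhoR : Tendsto (fun t => rhoR E (raiseIter E α σ t) v) atTop
      (𝓝 (rhoR E (alphaR α r) v)) := by
    simp only [raiseIter_eq_alphaR]
    exact (((continuous_rhoR E v).comp (continuous_alphaR α)).tendsto r).comp hr
  have tendsto_increment :
      Tendsto (fun t => rvec E α σ (t + 1) v - rvec E α σ t v) atTop (𝓝 0) := by
    have hrv := (tendsto_pi_nhds.1 hr) v
    simpa only [sub_self, Function.comp_def] using (hrv.comp (tendsto_add_atTop_nat 1)).sub hrv
  have frequently_eq : ∃ᶠ t in atTop, rhoR E (raiseIter E α σ t) v =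
      2 * (rvec E α σ (t + 1) v - rvec E α σ t v) := by
    refine (frequently_atTop.2 (hσ v)).mono fun t ht => ?_
    rw [rvec_succ, ht, Pi.add_apply, Pi.single_eq_same]
    ring
  simpa only [mul_zero] using
    tendsto_nhds_unique_of_frequently_eq tendsto_rhoR (tendsto_increment.const_mul 2) frequently_eq

end RaisingProcess

theorem raising_imbalance_le_height_spread_general
    [Fintype V] [Nonempty V] [DecidableEq V] {σ : ℕ → V} {r : V → ℝ}
    (hout : ∀ v, ∃ w, E v w) (hin : ∀ v, ∃ u, E u v) (hσ : Fair σ)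
    (hr : ∀ v, Tendsto (fun t => rvec E α σ t v) atTop (𝓝 (r v))) :
    (Finset.univ.sup' Finset.univ_nonempty fun v => rhoR E α v) / 2 ≤
      Finset.univ.sup' Finset.univ_nonempty (height r) -
        Finset.univ.inf' Finset.univ_nonempty (height r) := by
  have hbal : IsRaisingBalanced E (alphaR α r) :=
    hσ.isRaisingBalanced_alphaR (tendsto_pi_nhds.2 hr)
  obtain ⟨v, -, hv⟩ := Finset.univ.exists_mem_eq_sup' Finset.univ_nonempty fun v => rhoR E α v
  rw [hv]
  calc rhoR E α v / 2
      ≤ Finset.univ.sup' Finset.univ_nonempty (height r) - height r v :=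
        rhoR_div_two_le_sub_height (hout v) (hin v) (hbal v)
          fun u => Finset.le_sup' (height r) (Finset.mem_univ u)
    _ ≤ _ := sub_le_sub_left (Finset.inf'_le (height r) (Finset.mem_univ v)) _

/-- `ρ^R/2 ≤ h`, where `ρ^R = max_v ρ_v^R` and
`h = y_max − y_min`. -/
theorem raising_imbalance_le_height_spread
    [Fintype V] [Nonempty V] [DecidableEq V] (E : V → V → Prop)
    (hout : ∀ v, ∃ w, E v w) (hin : ∀ v, ∃ u, E u v)
    (hconn : ∀ u v : V, Relation.ReflTransGen E u v)
    (α : V → V → ℝ) (rstar : V → ℝ)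
    (hrstar : ∀ σ : ℕ → V, Fair σ → ∀ v,
      Tendsto (fun t => rvec E α σ t v) atTop (nhds (rstar v))) :
    (Finset.univ.sup' Finset.univ_nonempty fun v => rhoR E α v) / 2 ≤
      Finset.univ.sup' Finset.univ_nonempty (height rstar) -
        Finset.univ.inf' Finset.univ_nonempty (height rstar) := by
  obtain ⟨σ, hσ⟩ := exists_fair V
  exact raising_imbalance_le_height_spread_general hout hin hσ (hrstar σ hσ)
end

section
/- If a non-trivial balancing operation at a vertex v transforms a graph function α into a graph function ᾱ, then ᾱ < α in the order on graph functions, i.e., there exists w with G_ᾱ^w ≠ G_α^w and for the largest such w the edge set of G_ᾱ^w is strictly contained in the edge set of G_α^w. -/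
open Filter Topology

variable {V : Type*}

/-- The edge set of the threshold subgraph `G_β^w`: edges of weight at least `w`. -/
def edgesGe (E : V → V → Prop) (β : V → V → ℝ) (w : ℝ) : Set (V × V) :=
  {p : V × V | E p.1 p.2 ∧ w ≤ β p.1 p.2}

/-!
Write `O` and `I` for the maximal weights of the edges leaving and entering `v`. Balancing at `v`
changes only the non-loop edges incident to `v`, and it brings all of them down to weight at most
the average of `O` and `I`, which is less than `max O I` because `O ≠ I`. So thresholds above
`max O I` see no change, while at `max O I` every changed edge is absent afterwards. At least one
edge really disappears: one attaining the larger of `O` and `I`, which cannot be a loop because a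
loop counts towards both maxima.
-/

theorem add_div_two_lt_max {K : Type*} [Field K] [LinearOrder K] [IsStrictOrderedRing K] {x y : K}
    (h : x ≠ y) : (x + y) / 2 < max x y := by
  rw [← min_add_max x y]
  exact add_div_two_lt_right.mpr (min_lt_max.mpr h)

section Threshold

variable {E : V → V → Prop} {α β : V → V → ℝ} {w w' : ℝ}

theorem edgesGe_eq_of_changes_le
    (h : ∀ a b, E a b → β a b ≠ α a b → β a b ≤ w ∧ α a b ≤ w) (hw : w < w') :
    edgesGe E β w' = edgesGe E α w' := by
  ext ⟨a, b⟩
  refine and_congr_right fun hab => ?_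
  by_cases heq : β a b = α a b
  · exact iff_of_eq (congrArg (w' ≤ ·) heq)
  · obtain ⟨hβ, hα⟩ := h a b hab heq
    exact iff_of_false (hβ.trans_lt hw).not_ge (hα.trans_lt hw).not_ge

theorem edgesGe_subset_of_lt (h : ∀ a b, E a b → α a b < β a b → β a b < w) :
    edgesGe E β w ⊆ edgesGe E α w := by
  rintro ⟨a, b⟩ ⟨hab, hw⟩
  have hle : β a b ≤ α a b := le_of_not_gt fun hlt => (h a b hab hlt).not_ge hw
  exact ⟨hab, hw.trans hle⟩

theorem edgesGe_ssubset_of_lt (h : ∀ a b, E a b → α a b < β a b → β a b < w)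
    (hex : ∃ a b, E a b ∧ β a b < w ∧ w ≤ α a b) :
    edgesGe E β w ⊂ edgesGe E α w := by
  obtain ⟨a, b, hab, hβ, hα⟩ := hex
  exact (Set.ssubset_iff_of_subset (edgesGe_subset_of_lt h)).mpr
    ⟨(a, b), ⟨hab, hα⟩, fun hmem => hβ.not_ge hmem.2⟩

end Threshold

section Maxima

variable {E : V → V → Prop} {v : V}

theorem isGreatest_outMax (α : V → V → ℝ) (hfin : {w | E v w}.Finite) (hne : ∃ w, E v w) :
    IsGreatest {x | ∃ w, E v w ∧ x = α v w} (outMax E α v) := by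
  have himage : {x | ∃ w, E v w ∧ x = α v w} = α v '' {w | E v w} := by
    ext x
    exact exists_congr fun _ => and_congr_right fun _ => eq_comm
  rw [outMax, himage]
  exact (hfin.image (α v)).isCompact.isGreatest_sSup (Set.Nonempty.image (α v) hne)

theorem isGreatest_inMax (α : V → V → ℝ) (hfin : {u | E u v}.Finite) (hne : ∃ u, E u v) :
    IsGreatest {x | ∃ u, E u v ∧ x = α u v} (inMax E α v) :=
  isGreatest_outMax (E := flip E) (flip α) hfin hne

end Maxima

section Balance

variable [DecidableEq V] (E : V → V → Prop) (α : V → V → ℝ) {a b v : V}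

theorem balanceAt_eq_self_of_iff (h : a = v ↔ b = v) : balanceAt E α v a b = α a b := by
  simp only [balanceAt, h, add_sub_cancel_right]

theorem balanceAt_outEdge (hb : b ≠ v) :
    balanceAt E α v v b = α v b - (outMax E α v - inMax E α v) / 2 := by
  simp only [balanceAt, hb, if_true, if_false, add_zero]

theorem balanceAt_inEdge (ha : a ≠ v) :
    balanceAt E α v a v = α a v + (outMax E α v - inMax E α v) / 2 := by
  simp only [balanceAt, ha, if_true, if_false, sub_zero]

variable {E α}

theorem balanceAt_le_average_and_le_max
    (hout : outMax E α v ∈ upperBounds {x | ∃ w, E v w ∧ x = α v w})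
    (hin : inMax E α v ∈ upperBounds {x | ∃ u, E u v ∧ x = α u v})
    (hab : E a b) (hne : balanceAt E α v a b ≠ α a b) :
    balanceAt E α v a b ≤ (outMax E α v + inMax E α v) / 2 ∧
      α a b ≤ max (outMax E α v) (inMax E α v) := by
  have hone_endpoint : ¬(a = v ↔ b = v) := mt (balanceAt_eq_self_of_iff E α) hne
  by_cases ha : a = v
  · subst ha
    have hb : b ≠ a := by simpa only [true_iff] using hone_endpoint
    have hle : α a b ≤ outMax E α a := hout ⟨b, hab, rfl⟩
    refine ⟨?_, hle.trans (le_max_left _ _)⟩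
    rw [balanceAt_outEdge E α hb]
    linarith
  · obtain rfl : b = v := by simpa only [ha, false_iff, not_not] using hone_endpoint
    have hle : α a b ≤ inMax E α b := hin ⟨a, hab, rfl⟩
    refine ⟨?_, hle.trans (le_max_right _ _)⟩
    rw [balanceAt_inEdge E α ha]
    linarith

theorem exists_max_eq_and_balanceAt_ne
    (hout : IsGreatest {x | ∃ w, E v w ∧ x = α v w} (outMax E α v))
    (hin : IsGreatest {x | ∃ u, E u v ∧ x = α u v} (inMax E α v))
    (hnt : outMax E α v ≠ inMax E α v) :
    ∃ a b, E a b ∧ balanceAt E α v a b ≠ α a b ∧ max (outMax E α v) (inMax E α v) = α a b := by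
  rcases hnt.lt_or_gt with hlt | hlt
  · obtain ⟨u, hu, hmax⟩ := hin.1
    have huv : u ≠ v := by
      rintro rfl
      exact hlt.not_ge (hout.2 ⟨u, hu, hmax⟩)
    refine ⟨u, v, hu, ?_, (max_eq_right hlt.le).trans hmax⟩
    rw [balanceAt_inEdge E α huv]
    linarith
  · obtain ⟨w, hw, hmax⟩ := hout.1
    have hwv : w ≠ v := by
      rintro rfl
      exact hlt.not_ge (hin.2 ⟨w, hw, hmax⟩)
    refine ⟨v, w, hw, ?_, (max_eq_left hlt.le).trans hmax⟩
    rw [balanceAt_outEdge E α hwv]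
    linarith

end Balance

theorem balancing_strictly_decreasing_general
    [DecidableEq V] (E : V → V → Prop) (α : V → V → ℝ) (v : V)
    (hout : IsGreatest {x | ∃ w, E v w ∧ x = α v w} (outMax E α v))
    (hin : IsGreatest {x | ∃ u, E u v ∧ x = α u v} (inMax E α v))
    (hnt : outMax E α v ≠ inMax E α v) :
    ∃ w : ℝ,
      edgesGe E (balanceAt E α v) w ≠ edgesGe E α w ∧
      (∀ w' : ℝ, w < w' → edgesGe E (balanceAt E α v) w' = edgesGe E α w') ∧
      edgesGe E (balanceAt E α v) w ⊂ edgesGe E α w := by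
  have hchanged : ∀ a b, E a b → balanceAt E α v a b ≠ α a b →
      balanceAt E α v a b < max (outMax E α v) (inMax E α v) ∧
        α a b ≤ max (outMax E α v) (inMax E α v) := fun a b hab hne =>
    (balanceAt_le_average_and_le_max hout.2 hin.2 hab hne).imp_left
      fun hle => hle.trans_lt (add_div_two_lt_max hnt)
  obtain ⟨a, b, hab, hne, hmax⟩ := exists_max_eq_and_balanceAt_ne hout hin hnt
  have hssub := edgesGe_ssubset_of_lt (fun a b hab hlt => (hchanged a b hab hlt.ne').1)
    ⟨a, b, hab, (hchanged a b hab hne).1, hmax.le⟩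
  refine ⟨_, hssub.ne, fun w' hw' => ?_, hssub⟩
  exact edgesGe_eq_of_changes_le (fun a b hab hne => (hchanged a b hab hne).imp_left le_of_lt) hw'

/-- A non-trivial balancing operation at `v` is strictly decreasing
in the order on graph functions: there is a `w` at which the threshold subgraphs of
`ᾱ` and `α` differ, and at the largest such `w` the edge set of `G_ᾱ^w` is strictly
contained in that of `G_α^w`. -/
theorem balancing_strictly_decreasing
    [Fintype V] [Nonempty V] [DecidableEq V] (E : V → V → Prop)
    (hout : ∀ v, ∃ w, E v w) (hin : ∀ v, ∃ u, E u v)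
    (hconn : ∀ u v : V, Relation.ReflTransGen E u v)
    (α : V → V → ℝ) (v : V) (hnt : outMax E α v ≠ inMax E α v) :
    ∃ w : ℝ,
      edgesGe E (balanceAt E α v) w ≠ edgesGe E α w ∧
      (∀ w' : ℝ, w < w' → edgesGe E (balanceAt E α v) w' = edgesGe E α w') ∧
      edgesGe E (balanceAt E α v) w ⊂ edgesGe E α w :=
  balancing_strictly_decreasing_general E α v
    (isGreatest_outMax α (Set.toFinite _) (hout v))
    (isGreatest_inMax α (Set.toFinite _) (hin v)) hnt
end
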